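/- Let P be a three-criteria Pareto set of S, A an anchor Pareto set of S, τ ∈ ℕ a departure time with arrival time of J ≥ τ for every J ∈ S, and let λ, κ ∈ ℝ with λ ≥ 1 and κ ≥ 1 be the arrival slack and trip slack. For J ∈ P let α(J) ∈ A denote its anchor journey, i.e., the unique element of A with maximum number of trips among those with at most as many trips as J. Define the restricted Pareto set P_R := { J ∈ P | (trips of J : ℝ) ≤ (trips of α(J)) · κ and (arrival of J − τ : ℝ) ≤ (arrival of α(J) − τ) · λ }. Then for every a ∈ A there exists J ∈ P_R with the same arrival time and the same number of trips as a. In particular, P_R is nonempty. -/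

import Mathlib

/-- A three-criteria Pareto set of `S`: a subset `P ⊆ S` of minimum cardinality such that
every journey in `S` is weakly dominated (componentwise `≤` on all three criteria)
by some journey in `P`. -/
def IsParetoSet {J : Type*} (S : Finset J) (c : J → ℕ × ℕ × ℕ) (P : Finset J) : Prop :=
  P ⊆ S ∧ (∀ j ∈ S, ∃ p ∈ P, c p ≤ c j) ∧
    ∀ Q : Finset J, Q ⊆ S → (∀ j ∈ S, ∃ q ∈ Q, c q ≤ c j) → P.card ≤ Q.card

/-- An anchor Pareto set of `S`: a subset `A ⊆ S` of minimum cardinality such that every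
journey in `S` is weakly dominated in the two criteria arrival time (first component)
and number of trips (second component) by some journey in `A`. -/
def IsAnchorParetoSet {J : Type*} (S : Finset J) (c : J → ℕ × ℕ × ℕ) (A : Finset J) : Prop :=
  A ⊆ S ∧ (∀ j ∈ S, ∃ a ∈ A, (c a).1 ≤ (c j).1 ∧ (c a).2.1 ≤ (c j).2.1) ∧
    ∀ Q : Finset J, Q ⊆ S →
      (∀ j ∈ S, ∃ q ∈ Q, (c q).1 ≤ (c j).1 ∧ (c q).2.1 ≤ (c j).2.1) → A.card ≤ Q.card

/-!
Domination below refers to arrival time and number of trips. An anchor `a` is dominated by some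
`p ∈ P`, and `p` by some `b ∈ A`. Since `A` has no redundant elements, `b = a`, so `p` has the same
arrival time and number of trips as `a`. The anchor of `p` then has as many trips as `a`, hence is
comparable to `a`, hence equals `a`; so both slack conditions hold for `p`, as the slack factors are
at least one.
-/

section Domination

variable {J α : Type*} {S P A : Set J} {f : J → α}

/-- `D` is a subset of `S` whose elements weakly dominate all of `S` with respect to the criteria
`f`, smaller values being better. -/
def IsDominatingSubset [LE α] (f : J → α) (S D : Set J) : Prop :=
  D ⊆ S ∧ ∀ j ∈ S, ∃ d ∈ D, f d ≤ f j

theorem eq_of_le_of_minimal_isDominatingSubset [Preorder α]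
    (hA : Minimal (IsDominatingSubset f S) A)
    {a b : J} (ha : a ∈ A) (hb : b ∈ A) (hba : f b ≤ f a) : b = a := by
  by_contra hne
  have hdom : IsDominatingSubset f S (A \ {a}) := by
    refine ⟨Set.sdiff_subset.trans hA.prop.1, fun j hj => ?_⟩
    obtain ⟨d, hd, hdj⟩ := hA.prop.2 j hj
    by_cases hda : d = a
    · exact ⟨b, ⟨hb, hne⟩, hba.trans (hda ▸ hdj)⟩
    · exact ⟨d, ⟨hd, hda⟩, hdj⟩
  exact (hA.le_of_le hdom Set.sdiff_subset ha).2 rfl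

theorem exists_mem_eq_of_minimal_isDominatingSubset [PartialOrder α]
    (hP : IsDominatingSubset f S P) (hA : Minimal (IsDominatingSubset f S) A)
    {a : J} (ha : a ∈ A) : ∃ p ∈ P, f p = f a := by
  obtain ⟨p, hp, hpa⟩ := hP.2 a (hA.prop.1 ha)
  obtain ⟨b, hb, hbp⟩ := hA.prop.2 p (hP.1 hp)
  obtain rfl : b = a := eq_of_le_of_minimal_isDominatingSubset hA ha hb (hbp.trans hpa)
  exact ⟨p, hp, hpa.antisymm hbp⟩

theorem minimal_coe_of_forall_card_le {p : Set J → Prop} {A : Finset J} (hA : p A)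
    (hcard : ∀ Q : Finset J, p Q → A.card ≤ Q.card) : Minimal p (A : Set J) := by
  refine ⟨hA, fun D hD hDA => ?_⟩
  lift D to Finset J using A.finite_toSet.subset hDA
  exact (congrArg _ (Finset.eq_of_subset_of_card_le (mod_cast hDA) (hcard D hD))).ge

end Domination

section TwoCriteria

variable {J : Type*} {S P A : Set J}

theorem anchor_eq_of_trips_eq {α β : Type*} [LinearOrder α] [Preorder β] {arrival : J → α}
    {trips : J → β} (hA : Minimal (IsDominatingSubset (fun j => (arrival j, trips j)) S) A)
    {j a b : J} (ha : a ∈ A) (htrips : trips j = trips a)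
    (hb : MaximalFor (fun x => x ∈ A ∧ trips x ≤ trips j) trips b) : b = a := by
  have hba : trips b ≤ trips a := hb.prop.2.trans_eq htrips
  have hab : trips a ≤ trips b := hb.le_of_le ⟨ha, htrips.ge⟩ hba
  rcases le_total (arrival b) (arrival a) with h | h
  · exact eq_of_le_of_minimal_isDominatingSubset hA ha hb.prop.1 ⟨h, hba⟩
  · exact (eq_of_le_of_minimal_isDominatingSubset hA hb.prop.1 ha ⟨h, hab⟩).symm

/-- The restricted Pareto set `P_R`: the journeys of `P` whose number of trips and travel time
(arrival time minus departure time `τ`) exceed those of their anchor journey at most by the factors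
`kap` and `lam`, respectively. -/
def restrictedParetoSet {R : Type*} [LE R] [Sub R] [Mul R] (P : Set J) (arrival trips : J → R)
    (τ lam kap : R) (anchor : J → J) : Set J :=
  {j ∈ P | trips j ≤ trips (anchor j) * kap ∧ arrival j - τ ≤ (arrival (anchor j) - τ) * lam}

theorem restricted_pareto_contains_anchors_general {R : Type*} [Ring R] [LinearOrder R]
    [IsOrderedRing R] (hS : S.Nonempty) {arrival trips : J → R}
    (hP : IsDominatingSubset (fun j => (arrival j, trips j)) S P)
    (hA : Minimal (IsDominatingSubset (fun j => (arrival j, trips j)) S) A)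
    {τ : R} (hτ : ∀ j ∈ S, τ ≤ arrival j) (htrips : ∀ j ∈ S, 0 ≤ trips j)
    {lam kap : R} (hlam : 1 ≤ lam) (hkap : 1 ≤ kap) {anchor : J → J}
    (hanchor : ∀ j ∈ S, MaximalFor (fun a => a ∈ A ∧ trips a ≤ trips j) trips (anchor j)) :
    (∀ a ∈ A, ∃ j ∈ restrictedParetoSet P arrival trips τ lam kap anchor,
      arrival j = arrival a ∧ trips j = trips a) ∧
    (restrictedParetoSet P arrival trips τ lam kap anchor).Nonempty := by
  have hcontains : ∀ a ∈ A, ∃ j ∈ restrictedParetoSet P arrival trips τ lam kap anchor,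
      arrival j = arrival a ∧ trips j = trips a := by
    intro a ha
    obtain ⟨p, hp, hpa⟩ := exists_mem_eq_of_minimal_isDominatingSubset hP hA ha
    obtain ⟨harr, htr⟩ := Prod.mk.inj hpa
    have hpS : p ∈ S := hP.1 hp
    have hanchor_p : anchor p = a := anchor_eq_of_trips_eq hA ha htr (hanchor p hpS)
    refine ⟨p, ⟨hp, ?_, ?_⟩, harr, htr⟩
    · rw [hanchor_p, ← htr]
      exact le_mul_of_one_le_right (htrips p hpS) hkap
    · rw [hanchor_p, ← harr]
      exact le_mul_of_one_le_right (sub_nonneg.2 (hτ p hpS)) hlam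
  obtain ⟨s, hs⟩ := hS
  obtain ⟨j, hj, -⟩ := hcontains _ (hanchor s hs).prop.1
  exact ⟨hcontains, j, hj⟩

end TwoCriteria

section NatCriteria

variable {J R : Type*} [Ring R] [LinearOrder R] [IsOrderedRing R] [CharZero R]

theorem isDominatingSubset_natCast (f g : J → ℕ) (S : Set J) :
    IsDominatingSubset (fun j => ((f j : R), (g j : R))) S =
      IsDominatingSubset (fun j => (f j, g j)) S := by
  ext D
  simp only [IsDominatingSubset, Prod.mk_le_mk, Nat.cast_le]

theorem maximalFor_natCast_of_forall_le {p : J → Prop} {f : J → ℕ} {n : ℕ} {b : J}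
    (hb : p b ∧ f b ≤ n ∧ ∀ a, p a → f a ≤ n → f a ≤ f b) :
    MaximalFor (fun a => p a ∧ (f a : R) ≤ n) (fun a => (f a : R)) b :=
  ⟨⟨hb.1, Nat.cast_le.2 hb.2.1⟩,
    fun a ha _ => Nat.cast_le.2 (hb.2.2 a ha.1 (Nat.cast_le.1 ha.2))⟩

variable {S P A : Finset J} {c : J → ℕ × ℕ × ℕ}

theorem IsParetoSet.isDominatingSubset (hP : IsParetoSet S c P) :
    IsDominatingSubset (fun j => (((c j).1 : R), ((c j).2.1 : R))) (S : Set J) P := by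
  rw [isDominatingSubset_natCast]
  exact ⟨hP.1, fun j hj => (hP.2.1 j hj).imp fun _ ⟨hp, hpj⟩ => ⟨hp, hpj.1, hpj.2.1⟩⟩

theorem IsAnchorParetoSet.minimal (hA : IsAnchorParetoSet S c A) :
    Minimal (IsDominatingSubset (fun j => (((c j).1 : R), ((c j).2.1 : R))) (S : Set J)) A := by
  rw [isDominatingSubset_natCast]
  exact minimal_coe_of_forall_card_le ⟨hA.1, hA.2.1⟩ fun Q hQ => hA.2.2 Q hQ.1 hQ.2

end NatCriteria

/-- The restricted Pareto set contains, for each anchor journey, a journey with the same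
arrival time and number of trips; in particular, it is nonempty.

Here `τ` is the departure time (no journey of `S` arrives before `τ`), `λ` (`lam`) is the
arrival slack, `κ` (`kap`) is the trip slack, and `α j` (`anchor j`) denotes the anchor
journey of `j`, i.e., the unique element of `A` with maximum number of trips among those
with at most as many trips as `j`. -/
theorem restricted_pareto_contains_anchors {J : Type*} (S : Finset J) (hS : S.Nonempty)
    (c : J → ℕ × ℕ × ℕ) (P A : Finset J)
    (hP : IsParetoSet S c P) (hA : IsAnchorParetoSet S c A)
    (τ : ℕ) (hτ : ∀ j ∈ S, τ ≤ (c j).1)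
    (lam kap : ℝ) (hlam : 1 ≤ lam) (hkap : 1 ≤ kap)
    (anchor : J → J)
    (hanchor : ∀ j ∈ S, anchor j ∈ A ∧ (c (anchor j)).2.1 ≤ (c j).2.1 ∧
      ∀ a ∈ A, (c a).2.1 ≤ (c j).2.1 → (c a).2.1 ≤ (c (anchor j)).2.1) :
    (∀ a ∈ A, ∃ j ∈ {j ∈ (P : Set J) |
        ((c j).2.1 : ℝ) ≤ ((c (anchor j)).2.1 : ℝ) * kap ∧
        ((c j).1 : ℝ) - (τ : ℝ) ≤ (((c (anchor j)).1 : ℝ) - (τ : ℝ)) * lam},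
      (c j).1 = (c a).1 ∧ (c j).2.1 = (c a).2.1) ∧
    {j ∈ (P : Set J) |
        ((c j).2.1 : ℝ) ≤ ((c (anchor j)).2.1 : ℝ) * kap ∧
        ((c j).1 : ℝ) - (τ : ℝ) ≤ (((c (anchor j)).1 : ℝ) - (τ : ℝ)) * lam}.Nonempty := by
  simpa only [restrictedParetoSet, Finset.mem_coe, Nat.cast_inj] using
    restricted_pareto_contains_anchors_general (Finset.coe_nonempty.2 hS)
      hP.isDominatingSubset hA.minimal
      (fun j hj => Nat.cast_le.2 (hτ j hj)) (fun _ _ => Nat.cast_nonneg _) hlam hkap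
      fun j hj => maximalFor_natCast_of_forall_le (hanchor j hj)
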